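/- arXiv:2512.04558 — 10 statements merged into one kernel-verified Lean document; each statement's English description precedes it below -/
import Mathlib

section
/- For any two policies π₁, π₂ on a finite action set 𝒜 such that the support of π₁ is contained in the support of π₂ (so that the coverage C(π₁, π₂) is finite), and any 0 < ε < 1, the rejection threshold satisfies M^ε_{π₁,π₂} ≤ C(π₁, π₂)/ε; equivalently, E_{M}(π₁, π₂) ≤ ε for M = C(π₁, π₂)/ε. -/
open Finset

/-- The `E_M`-divergence between two policies on a finite action set. -/
noncomputable def EMdiv {A : Type*} [Fintype A] (p q : A → ℝ) (M : ℝ) : ℝ :=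
  ∑ a, max 0 (p a - M * q a)

/-- The rejection threshold `M^ε_{p,q}`: the smallest `M` with `E_M(p,q) ≤ ε`. -/
noncomputable def Meps {A : Type*} [Fintype A] (p q : A → ℝ) (ε : ℝ) : ℝ :=
  sInf {M : ℝ | EMdiv p q M ≤ ε}

/-- The coverage `C(p,q) = Σ_a p(a)² / q(a)`. -/
noncomputable def Cov {A : Type*} [Fintype A] (p q : A → ℝ) : ℝ :=
  ∑ a, p a ^ 2 / q a

/-- for policies `p, q` with `supp p ⊆ supp q` and `0 < ε < 1`,
`E_M(p,q) ≤ ε` for `M = C(p,q)/ε`; equivalently `M^ε_{p,q} ≤ C(p,q)/ε`. -/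
theorem stmt0 {A : Type*} [Fintype A] (p q : A → ℝ)
    (hp0 : ∀ a, 0 ≤ p a) (hp1 : ∑ a, p a = 1)
    (hq0 : ∀ a, 0 ≤ q a) (hq1 : ∑ a, q a = 1)
    (hsupp : ∀ a, q a = 0 → p a = 0)
    (ε : ℝ) (hε0 : 0 < ε) (hε1 : ε < 1) :
    EMdiv p q (Cov p q / ε) ≤ ε ∧ Meps p q ε ≤ Cov p q / ε := by
  have hC : 1 ≤ Cov p q := by
    have h : ∑ a, (2 * p a - q a) ≤ Cov p q := by
      unfold Cov
      apply Finset.sum_le_sum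
      intro a _
      rcases (hq0 a).eq_or_lt with h | h
      · simp [← h, hsupp a h.symm]
      · rw [le_div_iff₀ h]
        nlinarith [sq_nonneg (p a - q a)]
    rw [Finset.sum_sub_distrib, ← Finset.mul_sum, hp1, hq1] at h
    linarith
  have hM : 0 < Cov p q / ε := div_pos (by linarith) hε0
  have h1 : EMdiv p q (Cov p q / ε) ≤ ε := by
    have h : EMdiv p q (Cov p q / ε) ≤ ∑ a, p a ^ 2 / q a / (Cov p q / ε) := by
      unfold EMdiv
      apply Finset.sum_le_sum
      intro a _
      generalize Cov p q / ε = M at hM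
      rcases (hq0 a).eq_or_lt with h | h
      · simp [← h, hsupp a h.symm]
      · apply max_le
        · positivity
        · rw [div_div, le_div_iff₀ (by positivity)]
          nlinarith [sq_nonneg (p a - M * q a), mul_nonneg (hp0 a) (mul_pos h hM).le, sq_nonneg (p a)]
    rw [← Finset.sum_div] at h
    change _ ≤ Cov p q / (Cov p q / ε) at h
    rwa [div_div_cancel₀ (by linarith)] at h
  refine ⟨h1, csInf_le ⟨1 - ε, ?_⟩ h1⟩
  intro M hMε
  have h : ∑ a, (p a - M * q a) ≤ EMdiv p q M :=
    Finset.sum_le_sum fun a _ => le_max_right _ _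
  rw [Finset.sum_sub_distrib, ← Finset.mul_sum, hp1, hq1] at h
  have h2 : EMdiv p q M ≤ ε := hMε
  linarith
end

section
/- Let p, q, and μ be probability mass functions on a finite action set 𝒜 and let n ≥ 1 be a real number. If μ(a) ≤ n·q(a) for every a ∈ 𝒜 with p(a) > n·q(a), then Σ_{a∈𝒜} |p(a) − μ(a)| ≥ E_n(p, q). In particular, if an algorithm's output distribution μ satisfies μ(a) ≤ Σ_{i=1}^n p_i(a) for sampling distributions p_i with p_i(a) ≤ q(a) on the overshoot set {a : p(a) > n·q(a)}, then the L1 distance between p and μ is at least E_n(p, q). -/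
open Finset

/-- A policy on a finite action set is a probability mass function. -/
def IsPolicy {A : Type*} [Fintype A] (p : A → ℝ) : Prop :=
  (∀ a, 0 ≤ p a) ∧ ∑ a, p a = 1

/-- if `μ(a) ≤ n·q(a)` on the overshoot set `{a : p(a) > n·q(a)}`, then
`Σ_a |p(a) − μ(a)| ≥ E_n(p,q)`.  In particular, if `μ(a) ≤ Σ_{i=1}^n p_i(a)` for
sampling distributions `p_i` satisfying `p_i(a) ≤ q(a)` on the overshoot set, then
the L1 distance between `p` and `μ` is at least `E_n(p,q)`. -/
theorem stmt4 {A : Type*} [Fintype A]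
    (p q μ : A → ℝ) (hp : IsPolicy p) (hq : IsPolicy q) (hμ : IsPolicy μ) :
    (∀ n : ℝ, 1 ≤ n →
      (∀ a, n * q a < p a → μ a ≤ n * q a) →
      EMdiv p q n ≤ ∑ a, |p a - μ a|)
    ∧ (∀ n : ℕ, 1 ≤ n → ∀ ps : Fin n → A → ℝ,
        (∀ i, IsPolicy (ps i)) →
        (∀ a, (n : ℝ) * q a < p a → ∀ i, ps i a ≤ q a) →
        (∀ a, μ a ≤ ∑ i, ps i a) →
        EMdiv p q n ≤ ∑ a, |p a - μ a|) := by
  have key : ∀ n : ℝ, (∀ a, n * q a < p a → μ a ≤ n * q a) →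
      EMdiv p q n ≤ ∑ a, |p a - μ a| := by
    intro n h
    unfold EMdiv
    refine Finset.sum_le_sum fun a _ => max_le (abs_nonneg _) ?_
    by_cases ha : n * q a < p a
    · have h1 := h a ha
      have h2 := le_abs_self (p a - μ a)
      linarith
    · have h2 := abs_nonneg (p a - μ a)
      linarith
  refine ⟨fun n _ h => key n h, fun n _ ps _ hps hle => key n fun a ha => ?_⟩
  refine (hle a).trans ?_
  refine (Finset.sum_le_sum fun i _ => hps a ha i).trans ?_
  simp
end

section
/- Let 𝒜 be a finite action set, a* ∈ 𝒜, and let the comparator policy π* be the point mass at a*. Assume the mixture-of-reference-policies model, and let τ* ∈ 𝒯 maximize π^τ(a*) over τ ∈ 𝒯. Consider any sequential sample-and-evaluate algorithm with budget n whose i-th sampling distribution is π_LLM(· | h_i) for some history h_i (hence, a convex combination of the reference policies {π^τ}), and whose output â always lies among the sampled actions a₁, …, a_n. For any 0 < ε < 1, if n < M^ε_{π*, π^{τ*}}, then there exists a reward function r : 𝒜 → [−1, 1] such that the regret of the algorithm's output with respect to π* exceeds ε. -/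
open Finset

/-- Posterior weight of the reference index `τ` given a history `h`. -/
noncomputable def postW {T A : Type*} [Fintype T] (pref : T → ℝ) (pit : T → A → ℝ)
    (h : List A) (τ : T) : ℝ :=
  pref τ * (h.map (pit τ)).prod / ∑ τ', pref τ' * (h.map (pit τ')).prod

/-- The posterior-predictive policy `π_LLM(· | h)` of the mixture-of-reference-policies model. -/
noncomputable def piLLM {T A : Type*} [Fintype T] (pref : T → ℝ) (pit : T → A → ℝ)
    (h : List A) (a : A) : ℝ :=
  ∑ τ, pit τ a * postW pref pit h τ

/-- The point mass at `astar`. -/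
def pointMass {A : Type*} [DecidableEq A] (astar : A) : A → ℝ :=
  fun a => if a = astar then 1 else 0

/-- Probability that a sequential sample-and-evaluate algorithm with (adaptive)
sampling policies `p i prev` draws the trajectory `v`. -/
noncomputable def trajProb {A : Type*} (p : ℕ → List A → A → ℝ) (n : ℕ) (v : Fin n → A) : ℝ :=
  ∏ i : Fin n, p i.1 ((List.ofFn v).take i.1) (v i)

theorem postW_nonneg {T A : Type*} [Fintype T] [Fintype A] (pref : T → ℝ)
    (hpref0 : ∀ τ, 0 < pref τ) (pit : T → A → ℝ) (hpit : ∀ τ, IsPolicy (pit τ))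
    (h : List A) (τ : T) : 0 ≤ postW pref pit h τ := by
  have key : ∀ τ, 0 ≤ pref τ * (h.map (pit τ)).prod := by
    intro τ
    refine mul_nonneg (hpref0 τ).le (List.prod_nonneg ?_)
    intro x hx
    obtain ⟨a, -, rfl⟩ := List.mem_map.1 hx
    exact (hpit τ).1 a
  exact div_nonneg (key τ) (Finset.sum_nonneg fun τ _ => key τ)

theorem postW_sum_le {T A : Type*} [Fintype T] (pref : T → ℝ) (pit : T → A → ℝ)
    (h : List A) : ∑ τ, postW pref pit h τ ≤ 1 := by
  unfold postW
  rw [← Finset.sum_div]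
  exact div_self_le_one _

theorem piLLM_nonneg {T A : Type*} [Fintype T] [Fintype A] (pref : T → ℝ)
    (hpref0 : ∀ τ, 0 < pref τ) (pit : T → A → ℝ) (hpit : ∀ τ, IsPolicy (pit τ))
    (h : List A) (a : A) : 0 ≤ piLLM pref pit h a :=
  Finset.sum_nonneg fun τ _ =>
    mul_nonneg ((hpit τ).1 a) (postW_nonneg pref hpref0 pit hpit h τ)

theorem piLLM_sum_le {T A : Type*} [Fintype T] [Fintype A] (pref : T → ℝ)
    (pit : T → A → ℝ) (hpit : ∀ τ, IsPolicy (pit τ))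
    (h : List A) : ∑ a, piLLM pref pit h a ≤ 1 := by
  unfold piLLM
  rw [Finset.sum_comm]
  simp_rw [← Finset.sum_mul, (hpit _).2, one_mul]
  exact postW_sum_le pref pit h

theorem piLLM_le {T A : Type*} [Fintype T] [Fintype A] (pref : T → ℝ)
    (hpref0 : ∀ τ, 0 < pref τ) (pit : T → A → ℝ) (hpit : ∀ τ, IsPolicy (pit τ))
    (h : List A) (a : A) (q : ℝ) (hq0 : 0 ≤ q) (hq : ∀ τ, pit τ a ≤ q) :
    piLLM pref pit h a ≤ q := by
  calc piLLM pref pit h a ≤ ∑ τ, q * postW pref pit h τ :=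
        Finset.sum_le_sum fun τ _ =>
          mul_le_mul_of_nonneg_right (hq τ) (postW_nonneg pref hpref0 pit hpit h τ)
    _ = q * ∑ τ, postW pref pit h τ := by rw [Finset.mul_sum]
    _ ≤ q * 1 := mul_le_mul_of_nonneg_left (postW_sum_le pref pit h) hq0
    _ = q := mul_one q

theorem trajProb_snoc {A : Type*} (p : ℕ → List A → A → ℝ) (n : ℕ) (v : Fin n → A) (a : A) :
    trajProb p (n + 1) (Fin.snoc v a : Fin (n + 1) → A) =
      trajProb p n v * p n (List.ofFn v) a := by
  have hl : List.ofFn (Fin.snoc v a : Fin (n + 1) → A) = List.ofFn v ++ [a] := by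
    rw [List.ofFn_succ']
    simp
  unfold trajProb
  rw [Fin.prod_univ_castSucc, hl]
  congr 1
  · refine Finset.prod_congr rfl fun i _ => ?_
    rw [Fin.snoc_castSucc, Fin.val_castSucc, List.take_append_of_le_length]
    simp [i.2.le]
  · rw [Fin.snoc_last, Fin.val_last]
    congr 1
    rw [List.take_append_of_le_length (by simp), List.take_of_length_le (by simp)]

theorem sum_snoc {A : Type*} [Fintype A] (n : ℕ) (f : (Fin (n + 1) → A) → ℝ) :
    ∑ v, f v = ∑ v : Fin n → A, ∑ a, f (Fin.snoc v a) := by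
  rw [← (Fin.snocEquiv (fun _ : Fin (n + 1) => A)).sum_comp, Fintype.sum_prod_type,
    Finset.sum_comm]
  rfl

theorem trajProb_nonneg {A : Type*} (p : ℕ → List A → A → ℝ)
    (h0 : ∀ i l a, 0 ≤ p i l a) (n : ℕ) (v : Fin n → A) : 0 ≤ trajProb p n v :=
  Finset.prod_nonneg fun _ _ => h0 _ _ _

theorem trajProb_sum_le {A : Type*} [Fintype A] (p : ℕ → List A → A → ℝ)
    (h0 : ∀ i l a, 0 ≤ p i l a) (h1 : ∀ i l, ∑ a, p i l a ≤ 1) (n : ℕ) :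
    ∑ v : Fin n → A, trajProb p n v ≤ 1 := by
  induction n with
  | zero => simp [trajProb]
  | succ n ih =>
    rw [sum_snoc]
    simp_rw [trajProb_snoc, ← Finset.mul_sum]
    refine le_trans (Finset.sum_le_sum fun v _ => ?_) ih
    exact mul_le_of_le_one_right (trajProb_nonneg p h0 n v) (h1 _ _)

theorem trajProb_count_le {A : Type*} [Fintype A] [DecidableEq A] (p : ℕ → List A → A → ℝ)
    (h0 : ∀ i l a, 0 ≤ p i l a) (h1 : ∀ i l, ∑ a, p i l a ≤ 1) (s : A) (q : ℝ) (hq0 : 0 ≤ q)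
    (hq : ∀ i l, p i l s ≤ q) (n : ℕ) :
    ∑ v : Fin n → A, trajProb p n v * ∑ i, pointMass s (v i) ≤ n * q := by
  induction n with
  | zero => simp
  | succ n ih =>
    rw [sum_snoc]
    have hstep : ∀ v : Fin n → A,
        ∑ a, trajProb p (n + 1) (Fin.snoc v a : Fin (n + 1) → A) *
          ∑ i, pointMass s ((Fin.snoc v a : Fin (n + 1) → A) i) ≤
        trajProb p n v * ∑ i, pointMass s (v i) + trajProb p n v * q := by
      intro v
      have hc : 0 ≤ ∑ i, pointMass s (v i) :=
        Finset.sum_nonneg fun i _ => by unfold pointMass; split_ifs <;> norm_num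
      have e : ∑ a, trajProb p (n + 1) (Fin.snoc v a : Fin (n + 1) → A) *
          ∑ i, pointMass s ((Fin.snoc v a : Fin (n + 1) → A) i) =
          trajProb p n v * ((∑ a, p n (List.ofFn v) a) * ∑ i, pointMass s (v i)
            + p n (List.ofFn v) s) := by
        simp_rw [trajProb_snoc, Fin.sum_univ_castSucc, Fin.snoc_castSucc, Fin.snoc_last,
          mul_add, Finset.sum_add_distrib]
        congr 1
        · rw [Finset.sum_mul, Finset.mul_sum]
          exact Finset.sum_congr rfl fun a _ => by ring
        · simp [pointMass]
      rw [e, ← mul_add]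
      refine mul_le_mul_of_nonneg_left ?_ (trajProb_nonneg p h0 n v)
      exact add_le_add (mul_le_of_le_one_left hc (h1 _ _)) (hq _ _)
    refine le_trans (Finset.sum_le_sum fun v _ => hstep v) ?_
    rw [Finset.sum_add_distrib, ← Finset.sum_mul]
    have := mul_le_mul_of_nonneg_right (trajProb_sum_le p h0 h1 n) hq0
    push_cast
    linarith

theorem EMdiv_pointMass {A : Type*} [Fintype A] [DecidableEq A] (s : A) (q : A → ℝ)
    (hq : IsPolicy q) (M : ℝ) (hM : 0 ≤ M) :
    EMdiv (pointMass s) q M = max 0 (1 - M * q s) := by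
  unfold EMdiv
  rw [Finset.sum_eq_single s]
  · simp [pointMass]
  · intro b _ hb
    simp [pointMass, hb, mul_nonneg hM (hq.1 b)]
  · simp

theorem lt_of_lt_Meps {A : Type*} [Fintype A] [DecidableEq A] (s : A) (q : A → ℝ)
    (hq : IsPolicy q) (ε : ℝ) (hε0 : 0 < ε) (hε1 : ε < 1) (M : ℝ) (hM : 0 ≤ M)
    (h : M < Meps (pointMass s) q ε) : ε < 1 - M * q s := by
  have hb : BddBelow {M : ℝ | EMdiv (pointMass s) q M ≤ ε} := by
    refine ⟨0, fun x hx => ?_⟩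
    by_contra hneg
    push Not at hneg
    have h1 : max 0 (pointMass s s - x * q s) ≤ EMdiv (pointMass s) q x :=
      Finset.single_le_sum (f := fun a => max 0 (pointMass s a - x * q a))
        (fun a _ => le_max_left _ _) (Finset.mem_univ s)
    have h2 := le_max_right 0 (pointMass s s - x * q s)
    have h3 : pointMass s s = 1 := by simp [pointMass]
    have h4 : x * q s ≤ 0 := mul_nonpos_of_nonpos_of_nonneg hneg.le (hq.1 s)
    have h5 : EMdiv (pointMass s) q x ≤ ε := hx
    linarith
  have hlt : ε < EMdiv (pointMass s) q M := by
    by_contra hle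
    exact absurd (csInf_le hb (not_lt.1 hle)) (not_le.2 h)
  rw [EMdiv_pointMass s q hq M hM] at hlt
  rcases lt_max_iff.1 hlt with hl | hr
  · linarith
  · exact hr

/-- lower bound for sequential sample-and-evaluate algorithms in the
mixture-of-reference-policies model.  If each sampling distribution is `π_LLM(·|h)`
for some history `h`, the output always lies among the samples, and
`n < M^ε_{π*, π^{τ*}}` (with `π* = δ_{a*}` and `τ*` the index maximizing `π^τ(a*)`),
then some reward `r : A → [−1,1]` forces regret `> ε`. -/
theorem stmt5 {A : Type*} [Fintype A] [DecidableEq A] {T : Type*} [Fintype T]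
    (pref : T → ℝ) (hpref0 : ∀ τ, 0 < pref τ) (hpref1 : ∑ τ, pref τ = 1)
    (pit : T → A → ℝ) (hpit : ∀ τ, IsPolicy (pit τ))
    (astar : A) (τs : T) (hτs : ∀ τ, pit τ astar ≤ pit τs astar)
    (n : ℕ)
    (p : ℕ → List A → A → ℝ)
    (hpLLM : ∀ (i : ℕ) (prev : List A), ∃ h : List A, p i prev = piLLM pref pit h)
    (sel : (Fin n → A) → A) (hsel : ∀ v : Fin n → A, ∃ i, sel v = v i)
    (ε : ℝ) (hε0 : 0 < ε) (hε1 : ε < 1)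
    (hn : (n : ℝ) < Meps (pointMass astar) (pit τs) ε) :
    ∃ r : A → ℝ, (∀ a, -1 ≤ r a ∧ r a ≤ 1) ∧
      ε < r astar - ∑ v : Fin n → A, trajProb p n v * r (sel v) := by
  have h0 : ∀ i l a, 0 ≤ p i l a := by
    intro i l a
    obtain ⟨h, hh⟩ := hpLLM i l
    rw [hh]
    exact piLLM_nonneg pref hpref0 pit hpit h a
  have h1 : ∀ i l, ∑ a, p i l a ≤ 1 := by
    intro i l
    obtain ⟨h, hh⟩ := hpLLM i l
    rw [hh]
    exact piLLM_sum_le pref pit hpit h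
  have hq0 := (hpit τs).1 astar
  have hq : ∀ i l, p i l astar ≤ pit τs astar := by
    intro i l
    obtain ⟨h, hh⟩ := hpLLM i l
    rw [hh]
    exact piLLM_le pref hpref0 pit hpit h astar _ hq0 hτs
  have hpm : ∀ a, 0 ≤ pointMass astar a ∧ pointMass astar a ≤ 1 := by
    intro a
    unfold pointMass
    split_ifs <;> norm_num
  refine ⟨pointMass astar, fun a => ⟨by linarith [(hpm a).1], (hpm a).2⟩, ?_⟩
  have hlt := lt_of_lt_Meps astar (pit τs) (hpit τs) ε hε0 hε1 n n.cast_nonneg hn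
  have hcount := trajProb_count_le p h0 h1 astar _ hq0 hq n
  have hle : ∑ v : Fin n → A, trajProb p n v * pointMass astar (sel v) ≤
      ∑ v : Fin n → A, trajProb p n v * ∑ i, pointMass astar (v i) := by
    refine Finset.sum_le_sum fun v _ =>
      mul_le_mul_of_nonneg_left ?_ (trajProb_nonneg p h0 n v)
    obtain ⟨i, hi⟩ := hsel v
    rw [hi]
    exact Finset.single_le_sum (f := fun i => pointMass astar (v i))
      (fun i _ => (hpm _).1) (Finset.mem_univ i)
  have h3 : pointMass astar astar = 1 := by simp [pointMass]
  linarith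
end

section
/- Let 𝒜 be a finite action set, a* ∈ 𝒜, and let the comparator policy π* be the point mass at a*. Assume the mixture-of-reference-policies model, let τ* ∈ 𝒯 maximize π^τ(a*) over τ ∈ 𝒯, and let π_LLM(· | x) = Σ_τ p_ref(τ)·π^τ(·) be the prior-mixture policy. Then for every 0 < ε < 1, M^ε_{π*, π^{τ*}} ≤ M^ε_{π*, π_LLM(·|x)}, and the inequality is strict whenever there exists τ ∈ 𝒯 with p_ref(τ) > 0 and π^τ(a*) < π^{τ*}(a*). -/
open Finset

theorem EMdiv_pointMass_le_iff {A : Type*} [Fintype A] [DecidableEq A] (q : A → ℝ)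
    (hq : ∀ a, 0 ≤ q a) (astar : A) (ε : ℝ) (hε0 : 0 < ε) (hε1 : ε < 1) (M : ℝ) :
    EMdiv (pointMass astar) q M ≤ ε ↔ 1 - ε ≤ M * q astar := by
  unfold EMdiv
  constructor
  · intro h
    have h1 := Finset.single_le_sum (f := fun a => max 0 (pointMass astar a - M * q a))
      (fun a _ => le_max_left _ _) (Finset.mem_univ astar)
    have h2 := le_max_right 0 (pointMass astar astar - M * q astar)
    have h3 : pointMass astar astar = 1 := by simp [pointMass]
    linarith
  · intro h
    have hM : 0 ≤ M := by
      by_contra hneg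
      have := mul_nonpos_of_nonpos_of_nonneg (le_of_not_ge hneg) (hq astar)
      linarith
    rw [Finset.sum_eq_single astar]
    · simp only [pointMass, if_true]
      exact max_le hε0.le (by linarith)
    · intro b _ hb
      have := mul_nonneg hM (hq b)
      simp only [pointMass, if_neg hb]
      exact max_eq_left (by linarith)
    · simp

theorem Meps_pointMass {A : Type*} [Fintype A] [DecidableEq A] (q : A → ℝ)
    (hq : ∀ a, 0 ≤ q a) (astar : A) (ε : ℝ) (hε0 : 0 < ε) (hε1 : ε < 1) :
    Meps (pointMass astar) q ε = (1 - ε) / q astar := by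
  unfold Meps
  simp only [EMdiv_pointMass_le_iff q hq astar ε hε0 hε1]
  rcases (hq astar).eq_or_lt with h | h
  · have : {M : ℝ | 1 - ε ≤ M * q astar} = ∅ := by
      ext M
      simp [← h, hε1]
    rw [this, ← h]
    simp
  · have : {M : ℝ | 1 - ε ≤ M * q astar} = Set.Ici ((1 - ε) / q astar) := by
      ext M
      simp [div_le_iff₀ h]
    rw [this, csInf_Ici]

/-- with `π* = δ_{a*}`, `τ*` maximizing `π^τ(a*)`, and
`π_LLM(·|x) = Σ_τ p_ref(τ)·π^τ(·)` the prior mixture, for every `0 < ε < 1` one has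
`M^ε_{π*, π^{τ*}} ≤ M^ε_{π*, π_LLM(·|x)}`, strictly whenever some `τ` has
`p_ref(τ) > 0` and `π^τ(a*) < π^{τ*}(a*)`. -/
theorem stmt6 {A : Type*} [Fintype A] [DecidableEq A] {T : Type*} [Fintype T]
    (pref : T → ℝ) (hpref0 : ∀ τ, 0 < pref τ) (hpref1 : ∑ τ, pref τ = 1)
    (pit : T → A → ℝ) (hpit : ∀ τ, IsPolicy (pit τ))
    (astar : A) (τs : T) (hτs : ∀ τ, pit τ astar ≤ pit τs astar)
    (ε : ℝ) (hε0 : 0 < ε) (hε1 : ε < 1) :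
    Meps (pointMass astar) (pit τs) ε
        ≤ Meps (pointMass astar) (fun a => ∑ τ, pref τ * pit τ a) ε
    ∧ ((∃ τ, 0 < pref τ ∧ pit τ astar < pit τs astar) →
        Meps (pointMass astar) (pit τs) ε
          < Meps (pointMass astar) (fun a => ∑ τ, pref τ * pit τ a) ε) := by
  have hmix : ∀ a, 0 ≤ ∑ τ, pref τ * pit τ a := fun a =>
    Finset.sum_nonneg fun τ _ => mul_nonneg (hpref0 τ).le ((hpit τ).1 a)
  rw [Meps_pointMass _ (hpit τs).1 astar ε hε0 hε1, Meps_pointMass _ hmix astar ε hε0 hε1]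
  have hsum : ∑ τ, pref τ * pit τs astar = pit τs astar := by
    rw [← Finset.sum_mul, hpref1, one_mul]
  have hle : ∑ τ, pref τ * pit τ astar ≤ pit τs astar := by
    rw [← hsum]
    exact Finset.sum_le_sum fun τ _ => mul_le_mul_of_nonneg_left (hτs τ) (hpref0 τ).le
  have hge : pref τs * pit τs astar ≤ ∑ τ, pref τ * pit τ astar :=
    Finset.single_le_sum (f := fun τ => pref τ * pit τ astar)
      (fun τ _ => mul_nonneg (hpref0 τ).le ((hpit τ).1 astar)) (Finset.mem_univ τs)
  have hε : 0 < 1 - ε := by linarith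
  constructor
  · rcases ((hpit τs).1 astar).eq_or_lt with h | h
    · rw [← h, div_zero]
      exact div_nonneg hε.le (hmix astar)
    · have hpos := lt_of_lt_of_le (mul_pos (hpref0 τs) h) hge
      exact div_le_div_of_nonneg_left hε.le hpos hle
  · rintro ⟨τ, _, hτ⟩
    have h : 0 < pit τs astar := lt_of_le_of_lt ((hpit τ).1 astar) hτ
    have hpos := lt_of_lt_of_le (mul_pos (hpref0 τs) h) hge
    have hlt : ∑ τ, pref τ * pit τ astar < pit τs astar := by
      rw [← hsum]
      exact Finset.sum_lt_sum
        (fun τ _ => mul_le_mul_of_nonneg_left (hτs τ) (hpref0 τ).le)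
        ⟨τ, Finset.mem_univ τ, mul_lt_mul_of_pos_left hτ (hpref0 τ)⟩
    exact div_lt_div_of_pos_left hε hpos hlt
end

section
/- Let p and q be probability mass functions on a finite action set 𝒜 and M > 0. Define the truncated pseudo-distribution π_M(a) := min{p(a), M·q(a)} and its total mass A := Σ_{a∈𝒜} π_M(a). Then A = 1 − E_M(p, q), and if A > 0, the normalized truncation satisfies Σ_{a∈𝒜} |p(a) − π_M(a)/A| ≤ 2·E_M(p, q). -/
open Finset

/-- with the truncated pseudo-distribution `π_M(a) = min{p(a), M·q(a)}`
of total mass `A₀ = Σ_a π_M(a)`, one has `A₀ = 1 − E_M(p,q)`, and if `A₀ > 0` then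
`Σ_a |p(a) − π_M(a)/A₀| ≤ 2·E_M(p,q)`. -/
theorem stmt9 {A : Type*} [Fintype A]
    (p q : A → ℝ) (hp : IsPolicy p) (hq : IsPolicy q)
    (M : ℝ) (hM : 0 < M) :
    (∑ a, min (p a) (M * q a)) = 1 - EMdiv p q M
    ∧ (0 < ∑ a, min (p a) (M * q a) →
        ∑ a, |p a - min (p a) (M * q a) / (∑ b, min (p b) (M * q b))|
          ≤ 2 * EMdiv p q M) := by
  have h1 : (∑ a, min (p a) (M * q a)) = 1 - EMdiv p q M := by
    rw [EMdiv, ← hp.2, ← Finset.sum_sub_distrib]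
    refine Finset.sum_congr rfl fun a _ => ?_
    rcases le_total (p a) (M * q a) with h | h
    · rw [min_eq_left h, max_eq_left (by linarith)]; ring
    · rw [min_eq_right h, max_eq_right (by linarith)]; ring
  refine ⟨h1, fun hS => ?_⟩
  have hE : 0 ≤ EMdiv p q M := Finset.sum_nonneg fun a _ => le_max_left _ _
  generalize hSd : (∑ a, min (p a) (M * q a)) = S at *
  have hS1 : S ≤ 1 := by linarith
  calc ∑ a, |p a - min (p a) (M * q a) / S|
      ≤ ∑ a, ((p a - min (p a) (M * q a)) +
          (min (p a) (M * q a) / S - min (p a) (M * q a))) := by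
        refine Finset.sum_le_sum fun a _ => ?_
        have h0 : 0 ≤ min (p a) (M * q a) :=
          le_min (hp.1 a) (mul_nonneg hM.le (hq.1 a))
        have h2 : min (p a) (M * q a) ≤ p a := min_le_left _ _
        have h3 : min (p a) (M * q a) ≤ min (p a) (M * q a) / S :=
          le_div_self h0 hS hS1
        rw [abs_le]
        constructor <;> linarith
    _ = 2 * EMdiv p q M := by
        rw [Finset.sum_add_distrib, Finset.sum_sub_distrib, Finset.sum_sub_distrib,
          ← Finset.sum_div, hSd, hp.2, div_self hS.ne']
        linarith
end

section
/- Posterior ratio bound for mixtures. Assume the mixture-of-reference-policies model, and fix τ* ∈ 𝒯 with p_ref(τ*) > 0 and Δ > 0. Let h = (a₁, …, a_k) ∈ 𝒜^k be a history whose every action satisfies the margin condition π^τ(a_j) ≤ e^{−Δ}·π^{τ*}(a_j) for all τ ≠ τ* (with π^{τ*}(a_j) > 0). Then for every a ∈ 𝒜 with π^{τ*}(a) > 0, π_LLM(a | h) / π^{τ*}(a) ≥ 1 / (1 + e^{−kΔ}/p_ref(τ*)). -/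
open Finset

theorem prod_margin {A : Type*} (p q : A → ℝ) (Δ : ℝ) (hp : ∀ a, 0 ≤ p a) (h : List A)
    (hm : ∀ a ∈ h, 0 < q a ∧ p a ≤ Real.exp (-Δ) * q a) :
    (h.map p).prod ≤ Real.exp (-(h.length : ℝ) * Δ) * (h.map q).prod := by
  induction h with
  | nil => simp
  | cons b t ih =>
    have h1 := hm b (by simp)
    have h2 := ih (fun a ha => hm a (by simp [ha]))
    have h0 : 0 ≤ (t.map p).prod := List.prod_nonneg (by
      intro x hx
      obtain ⟨a, _, rfl⟩ := List.mem_map.1 hx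
      exact hp a)
    have he : Real.exp (-((b :: t).length : ℝ) * Δ)
        = Real.exp (-Δ) * Real.exp (-(t.length : ℝ) * Δ) := by
      rw [← Real.exp_add]
      congr 1
      push_cast [List.length_cons]
      ring
    rw [he, List.map_cons, List.map_cons, List.prod_cons, List.prod_cons]
    calc p b * (t.map p).prod
        ≤ (Real.exp (-Δ) * q b) * (Real.exp (-(t.length : ℝ) * Δ) * (t.map q).prod) :=
          mul_le_mul h1.2 h2 h0 (mul_nonneg (Real.exp_pos _).le h1.1.le)
      _ = _ := by ring

/-- posterior ratio bound for mixtures.  If every action in the history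
`h` (of length `k`) satisfies the margin condition `π^τ(a_j) ≤ e^{−Δ}·π^{τ*}(a_j)` for
all `τ ≠ τ*` (with `π^{τ*}(a_j) > 0`), then for every `a` with `π^{τ*}(a) > 0`,
`π_LLM(a|h)/π^{τ*}(a) ≥ 1/(1 + e^{−kΔ}/p_ref(τ*))`. -/
theorem stmt11 {A : Type*} [Fintype A] {T : Type*} [Fintype T]
    (pref : T → ℝ) (hpref0 : ∀ τ, 0 < pref τ) (hpref1 : ∑ τ, pref τ = 1)
    (pit : T → A → ℝ) (hpit : ∀ τ, IsPolicy (pit τ))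
    (τs : T) (Δ : ℝ) (hΔ : 0 < Δ)
    (h : List A)
    (hmargin : ∀ a ∈ h, 0 < pit τs a ∧
      ∀ τ, τ ≠ τs → pit τ a ≤ Real.exp (-Δ) * pit τs a) :
    ∀ a, 0 < pit τs a →
      1 / (1 + Real.exp (-(h.length : ℝ) * Δ) / pref τs)
        ≤ piLLM pref pit h a / pit τs a := by
  classical
  intro a ha
  have hP0 : ∀ τ, 0 ≤ (h.map (pit τ)).prod := fun τ => List.prod_nonneg (by
    intro x hx
    obtain ⟨b, _, rfl⟩ := List.mem_map.1 hx
    exact (hpit τ).1 b)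
  have hPs : 0 < (h.map (pit τs)).prod := List.prod_pos (by
    intro x hx
    obtain ⟨b, hb, rfl⟩ := List.mem_map.1 hx
    exact (hmargin b hb).1)
  have hPm : ∀ τ, τ ≠ τs → (h.map (pit τ)).prod
      ≤ Real.exp (-(h.length : ℝ) * Δ) * (h.map (pit τs)).prod := fun τ hτ =>
    prod_margin _ _ Δ (hpit τ).1 h (fun b hb => ⟨(hmargin b hb).1, (hmargin b hb).2 τ hτ⟩)
  have hE := Real.exp_pos (-(h.length : ℝ) * Δ)
  have hL : pit τs a * postW pref pit h τs ≤ piLLM pref pit h a := by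
    unfold piLLM
    refine Finset.single_le_sum (f := fun τ => pit τ a * postW pref pit h τ) ?_
      (Finset.mem_univ τs)
    intro τ _
    refine mul_nonneg ((hpit τ).1 a) (div_nonneg (mul_nonneg (hpref0 τ).le (hP0 τ)) ?_)
    exact Finset.sum_nonneg fun t _ => mul_nonneg (hpref0 t).le (hP0 t)
  have hW : 1 / (1 + Real.exp (-(h.length : ℝ) * Δ) / pref τs) ≤ postW pref pit h τs := by
    unfold postW
    generalize Real.exp (-(h.length : ℝ) * Δ) = E at *
    have hs := hpref0 τs
    have hSpos : 0 < ∑ τ', pref τ' * (h.map (pit τ')).prod :=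
      Finset.sum_pos' (fun t _ => mul_nonneg (hpref0 t).le (hP0 t))
        ⟨τs, Finset.mem_univ _, mul_pos hs hPs⟩
    have hS : ∑ τ', pref τ' * (h.map (pit τ')).prod
        ≤ (pref τs + E) * (h.map (pit τs)).prod := by
      have h1 : ∑ τ', pref τ' * (h.map (pit τ')).prod
          ≤ ∑ τ', ((if τ' = τs then pref τs * (h.map (pit τs)).prod else 0)
            + pref τ' * (E * (h.map (pit τs)).prod)) := by
        refine Finset.sum_le_sum fun t _ => ?_
        by_cases ht : t = τs
        · subst ht
          rw [if_pos rfl]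
          have := mul_pos hs (mul_pos hE hPs)
          linarith
        · rw [if_neg ht, zero_add]
          exact mul_le_mul_of_nonneg_left (hPm t ht) (hpref0 t).le
      rw [Finset.sum_add_distrib, ← Finset.sum_mul, hpref1, Finset.sum_ite_eq' Finset.univ τs,
        if_pos (Finset.mem_univ _)] at h1
      linarith
    have hrw : 1 / (1 + E / pref τs) = pref τs / (pref τs + E) := by
      field_simp
    rw [hrw, div_le_div_iff₀ (by linarith) hSpos]
    calc _ ≤ pref τs * ((pref τs + E) * (h.map (pit τs)).prod) :=
          mul_le_mul_of_nonneg_left hS hs.le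
      _ = _ := by ring
  rw [le_div_iff₀ ha]
  calc _ ≤ postW pref pit h τs * pit τs a := mul_le_mul_of_nonneg_right hW ha.le
    _ ≤ _ := by linarith
end

section
/- Posterior weight concentration. Assume the mixture-of-reference-policies model, and fix τ* ∈ 𝒯 with p_ref(τ*) > 0 and Δ > 0. Let h = (a₁, …, a_k) ∈ 𝒜^k be a history whose every action satisfies the margin condition π^τ(a_j) ≤ e^{−Δ}·π^{τ*}(a_j) for all τ ≠ τ* (with π^{τ*}(a_j) > 0). Then the posterior weight of τ* satisfies w_h(τ*) ≥ 1 − (1 − p_ref(τ*)) / (1 + p_ref(τ*)·(e^{kΔ} − 1)) ≥ 1 / (1 + e^{−kΔ}/p_ref(τ*)). -/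
open Finset

theorem prod_pos_aux {A : Type*} (f : A → ℝ) (h : List A) (hf : ∀ a ∈ h, 0 < f a) :
    0 < (h.map f).prod := by
  induction h with
  | nil => simp
  | cons a t ih =>
    simp only [List.map_cons, List.prod_cons]
    exact mul_pos (hf a (by simp)) (ih fun b hb => hf b (by simp [hb]))

theorem prod_margin_aux {A : Type*} (f g : A → ℝ) (Δ : ℝ) (h : List A)
    (hg : ∀ a, 0 ≤ g a) (hf : ∀ a ∈ h, 0 < f a)
    (hm : ∀ a ∈ h, g a ≤ Real.exp (-Δ) * f a) :
    0 ≤ (h.map g).prod ∧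
      Real.exp ((h.length : ℝ) * Δ) * (h.map g).prod ≤ (h.map f).prod := by
  induction h with
  | nil => simp
  | cons a t ih =>
    obtain ⟨h0, h1⟩ := ih (fun b hb => hf b (by simp [hb])) (fun b hb => hm b (by simp [hb]))
    simp only [List.map_cons, List.prod_cons, List.length_cons]
    refine ⟨mul_nonneg (hg a) h0, ?_⟩
    have ha : Real.exp Δ * g a ≤ f a := by
      calc Real.exp Δ * g a ≤ Real.exp Δ * (Real.exp (-Δ) * f a) :=
            mul_le_mul_of_nonneg_left (hm a (by simp)) (Real.exp_pos _).le
        _ = f a := by rw [← mul_assoc, ← Real.exp_add]; simp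
    have he : Real.exp (((t.length + 1 : ℕ) : ℝ) * Δ)
        = Real.exp ((t.length : ℝ) * Δ) * Real.exp Δ := by
      rw [← Real.exp_add]; congr 1; push_cast; ring
    rw [he]
    calc _ = (Real.exp Δ * g a) * (Real.exp ((t.length : ℝ) * Δ) * (t.map g).prod) := by ring
      _ ≤ _ := mul_le_mul ha h1 (mul_nonneg (Real.exp_pos _).le h0) (hf a (by simp)).le

/-- posterior weight concentration.  If every action in the history
`h` (of length `k`) satisfies the margin condition `π^τ(a_j) ≤ e^{−Δ}·π^{τ*}(a_j)`
for all `τ ≠ τ*` (with `π^{τ*}(a_j) > 0`), then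
`w_h(τ*) ≥ 1 − (1 − p_ref(τ*))/(1 + p_ref(τ*)(e^{kΔ} − 1)) ≥ 1/(1 + e^{−kΔ}/p_ref(τ*))`. -/
theorem stmt12 {A : Type*} [Fintype A] {T : Type*} [Fintype T]
    (pref : T → ℝ) (hpref0 : ∀ τ, 0 < pref τ) (hpref1 : ∑ τ, pref τ = 1)
    (pit : T → A → ℝ) (hpit : ∀ τ, IsPolicy (pit τ))
    (τs : T) (Δ : ℝ) (hΔ : 0 < Δ)
    (h : List A)
    (hmargin : ∀ a ∈ h, 0 < pit τs a ∧
      ∀ τ, τ ≠ τs → pit τ a ≤ Real.exp (-Δ) * pit τs a) :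
    1 - (1 - pref τs) / (1 + pref τs * (Real.exp ((h.length : ℝ) * Δ) - 1))
        ≤ postW pref pit h τs
    ∧ 1 / (1 + Real.exp (-(h.length : ℝ) * Δ) / pref τs)
        ≤ 1 - (1 - pref τs) / (1 + pref τs * (Real.exp ((h.length : ℝ) * Δ) - 1)) := by
  classical
  have hk : Real.exp (-(h.length : ℝ) * Δ) = (Real.exp ((h.length : ℝ) * Δ))⁻¹ := by
    rw [← Real.exp_neg]; congr 1; ring
  have hP := prod_pos_aux (pit τs) h (fun a ha => (hmargin a ha).1)
  have hQ : ∀ τ, τ ≠ τs → 0 ≤ (h.map (pit τ)).prod ∧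
      Real.exp ((h.length : ℝ) * Δ) * (h.map (pit τ)).prod ≤ (h.map (pit τs)).prod :=
    fun τ hτ => prod_margin_aux (pit τs) (pit τ) Δ h (hpit τ).1
      (fun a ha => (hmargin a ha).1) (fun a ha => (hmargin a ha).2 τ hτ)
  have hp := hpref0 τs
  have hsplit := Finset.add_sum_erase univ pref (Finset.mem_univ τs)
  have hS := Finset.add_sum_erase univ (fun τ => pref τ * (h.map (pit τ)).prod)
    (Finset.mem_univ τs)
  have hR0 : 0 ≤ ∑ τ ∈ univ.erase τs, pref τ * (h.map (pit τ)).prod :=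
    Finset.sum_nonneg fun τ hτ =>
      mul_nonneg (hpref0 τ).le (hQ τ (Finset.ne_of_mem_erase hτ)).1
  have hr0 : 0 ≤ ∑ τ ∈ univ.erase τs, pref τ :=
    Finset.sum_nonneg fun τ _ => (hpref0 τ).le
  have hR : Real.exp ((h.length : ℝ) * Δ) *
      ∑ τ ∈ univ.erase τs, pref τ * (h.map (pit τ)).prod
      ≤ (∑ τ ∈ univ.erase τs, pref τ) * (h.map (pit τs)).prod := by
    rw [Finset.mul_sum, Finset.sum_mul]
    refine Finset.sum_le_sum fun τ hτ => ?_
    have := mul_le_mul_of_nonneg_left (hQ τ (Finset.ne_of_mem_erase hτ)).2 (hpref0 τ).le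
    linarith
  have hE := Real.exp_pos ((h.length : ℝ) * Δ)
  rw [hk]
  unfold postW
  rw [← hS]
  generalize (h.map (pit τs)).prod = P at *
  generalize Real.exp ((h.length : ℝ) * Δ) = E at *
  generalize ∑ τ ∈ univ.erase τs, pref τ * (h.map (pit τ)).prod = R at *
  have hr : ∑ τ ∈ univ.erase τs, pref τ = 1 - pref τs := by linarith
  rw [hr] at hR hr0
  generalize pref τs = p at *
  have hpE : 0 < p * E := mul_pos hp hE
  have hD : 0 < 1 + p * (E - 1) := by linarith
  have e1 : 1 - (1 - p) / (1 + p * (E - 1)) = p * E / (1 + p * (E - 1)) := by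
    field_simp; ring
  have e2 : 1 / (1 + E⁻¹ / p) = p * E / (p * E + 1) := by
    field_simp
  have hpP : 0 < p * P := mul_pos hp hP
  rw [e1, e2]
  constructor
  · rw [div_le_div_iff₀ hD (by linarith)]
    have := mul_le_mul_of_nonneg_left hR hp.le
    linarith
  · exact div_le_div_of_nonneg_left hpE.le hD (by linarith)
end

section
/- Perturbation stability of the E_M-divergence and rejection thresholds. Let p, q₁, q₂ be probability mass functions on a finite action set 𝒜 and 0 < ε < 1. If q₁(a) ≥ (1 − ε)·q₂(a) for every a ∈ 𝒜, then for every M ≥ 0, E_M(p, q₁) ≤ (1 − ε)·E_M(p, q₂) + ε. Consequently, if M^ε_{p,q₂} < ∞ then E_{M^ε_{p,q₂}}(p, q₁) ≤ 2ε, so M^{2ε}_{p,q₁} ≤ M^ε_{p,q₂}. -/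
open Finset

/-- perturbation stability of `E_M` and rejection thresholds.  If
`q₁ ≥ (1−ε)·q₂` pointwise, then `E_M(p,q₁) ≤ (1−ε)·E_M(p,q₂) + ε` for all `M ≥ 0`;
consequently, if `M^ε_{p,q₂} < ∞` then `E_{M^ε_{p,q₂}}(p,q₁) ≤ 2ε` and
`M^{2ε}_{p,q₁} ≤ M^ε_{p,q₂}`. -/
theorem stmt13 {A : Type*} [Fintype A]
    (p q1 q2 : A → ℝ) (hp : IsPolicy p) (hq1 : IsPolicy q1) (hq2 : IsPolicy q2)
    (ε : ℝ) (hε0 : 0 < ε) (hε1 : ε < 1)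
    (hdom : ∀ a, (1 - ε) * q2 a ≤ q1 a) :
    (∀ M : ℝ, 0 ≤ M → EMdiv p q1 M ≤ (1 - ε) * EMdiv p q2 M + ε)
    ∧ ({M : ℝ | EMdiv p q2 M ≤ ε}.Nonempty →
        EMdiv p q1 (Meps p q2 ε) ≤ 2 * ε ∧ Meps p q1 (2 * ε) ≤ Meps p q2 ε) := by
  have bdd : ∀ (q : A → ℝ), IsPolicy q → ∀ M : ℝ, 1 - M ≤ EMdiv p q M := by
    intro q hq M
    have h : ∑ a, (p a - M * q a) ≤ EMdiv p q M :=
      Finset.sum_le_sum fun a _ => le_max_right _ _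
    rw [Finset.sum_sub_distrib, ← Finset.mul_sum, hp.2, hq.2, mul_one] at h
    exact h
  have h1 : ∀ M : ℝ, 0 ≤ M → EMdiv p q1 M ≤ (1 - ε) * EMdiv p q2 M + ε := by
    intro M hM
    have h : EMdiv p q1 M ≤ ∑ a, ((1 - ε) * max 0 (p a - M * q2 a) + ε * p a) := by
      refine Finset.sum_le_sum fun a _ => ?_
      have hpa := mul_nonneg hε0.le (hp.1 a)
      have hm0 := mul_nonneg (sub_nonneg.2 hε1.le) (le_max_left 0 (p a - M * q2 a))
      have hm1 := mul_le_mul_of_nonneg_left (le_max_right 0 (p a - M * q2 a))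
        (sub_nonneg.2 hε1.le)
      have hd := mul_le_mul_of_nonneg_left (hdom a) hM
      exact max_le (by linarith) (by linarith)
    rw [Finset.sum_add_distrib, ← Finset.mul_sum, ← Finset.mul_sum, hp.2, mul_one] at h
    exact h
  refine ⟨h1, fun hne => ?_⟩
  have hclosed : IsClosed {M : ℝ | EMdiv p q2 M ≤ ε} := by
    refine isClosed_le ?_ continuous_const
    unfold EMdiv
    fun_prop
  have hbdd : BddBelow {M : ℝ | EMdiv p q2 M ≤ ε} :=
    ⟨1 - ε, fun M hM => by
      have h := bdd q2 hq2 M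
      have hM' : EMdiv p q2 M ≤ ε := hM
      linarith⟩
  have hmem : EMdiv p q2 (Meps p q2 ε) ≤ ε := hclosed.csInf_mem hne hbdd
  have hnn : 0 ≤ Meps p q2 ε := by
    have h := bdd q2 hq2 (Meps p q2 ε)
    linarith
  have h2 : EMdiv p q1 (Meps p q2 ε) ≤ 2 * ε := by
    have h := h1 _ hnn
    have h' := mul_le_mul_of_nonneg_left hmem (sub_nonneg.2 hε1.le)
    nlinarith
  refine ⟨h2, csInf_le ⟨1 - 2 * ε, fun M hM => ?_⟩ h2⟩
  have h := bdd q1 hq1 M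
  have hM' : EMdiv p q1 M ≤ 2 * ε := hM
  linarith
end

section
/- Coverage of the posterior predictive given a filtered history. Assume the mixture-of-reference-policies model, fix τ* ∈ 𝒯 with p_ref(τ*) > 0 and Δ > 0, and let h = (a₁, …, a_k) ∈ 𝒜^k be a history whose every action satisfies π^τ(a_j) ≤ e^{−Δ}·π^{τ*}(a_j) for all τ ≠ τ* (with π^{τ*}(a_j) > 0). Let π* be a comparator policy whose support is contained in the support of π^{τ*}. Then C(π*, π_LLM(·|h)) ≤ (1 + e^{−kΔ}/p_ref(τ*)) · C(π*, π^{τ*}). -/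
open Finset

lemma margin_prod {A : Type*} (f g : A → ℝ) (Δ : ℝ) (h : List A)
    (hf : ∀ a, 0 ≤ f a)
    (hm : ∀ a ∈ h, 0 < g a ∧ f a ≤ Real.exp (-Δ) * g a) :
    (h.map f).prod ≤ Real.exp (-(h.length : ℝ) * Δ) * (h.map g).prod := by
  induction h with
  | nil => simp
  | cons a l ih =>
    have h1 := hm a (by simp)
    have h2 := ih (fun b hb => hm b (by simp [hb]))
    have h3 : 0 ≤ (l.map f).prod := List.prod_nonneg (by
      intro x hx
      obtain ⟨b, _, rfl⟩ := List.mem_map.1 hx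
      exact hf b)
    have h4 : Real.exp (-((a :: l).length : ℝ) * Δ)
        = Real.exp (-Δ) * Real.exp (-(l.length : ℝ) * Δ) := by
      rw [← Real.exp_add]
      congr 1
      push_cast [List.length_cons]
      ring
    rw [h4, List.map_cons, List.map_cons, List.prod_cons, List.prod_cons]
    calc f a * (l.map f).prod
        ≤ (Real.exp (-Δ) * g a) * (Real.exp (-(l.length : ℝ) * Δ) * (l.map g).prod) :=
          mul_le_mul h1.2 h2 h3 (mul_nonneg (Real.exp_pos _).le h1.1.le)
      _ = _ := by ring

/-- coverage of the posterior predictive given a filtered history.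
If every action of the history `h` (of length `k`) satisfies the margin condition
`π^τ(a_j) ≤ e^{−Δ}·π^{τ*}(a_j)` for all `τ ≠ τ*` (with `π^{τ*}(a_j) > 0`), and the
support of `π*` is contained in that of `π^{τ*}`, then
`C(π*, π_LLM(·|h)) ≤ (1 + e^{−kΔ}/p_ref(τ*)) · C(π*, π^{τ*})`. -/
theorem stmt16 {A : Type*} [Fintype A] {T : Type*} [Fintype T]
    (pref : T → ℝ) (hpref0 : ∀ τ, 0 < pref τ) (hpref1 : ∑ τ, pref τ = 1)
    (pit : T → A → ℝ) (hpit : ∀ τ, IsPolicy (pit τ))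
    (τs : T) (Δ : ℝ) (hΔ : 0 < Δ)
    (h : List A)
    (hmargin : ∀ a ∈ h, 0 < pit τs a ∧
      ∀ τ, τ ≠ τs → pit τ a ≤ Real.exp (-Δ) * pit τs a)
    (πstar : A → ℝ) (hπstar : IsPolicy πstar)
    (hsupp : ∀ a, 0 < πstar a → 0 < pit τs a) :
    Cov πstar (piLLM pref pit h)
      ≤ (1 + Real.exp (-(h.length : ℝ) * Δ) / pref τs) * Cov πstar (pit τs) := by
  classical
  have hPnn : ∀ τ, 0 ≤ (h.map (pit τ)).prod := fun τ => List.prod_nonneg (by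
    intro x hx
    obtain ⟨b, _, rfl⟩ := List.mem_map.1 hx
    exact (hpit τ).1 b)
  have hPs : 0 < (h.map (pit τs)).prod := List.prod_pos (by
    intro x hx
    obtain ⟨b, hb, rfl⟩ := List.mem_map.1 hx
    exact (hmargin b hb).1)
  have hle : ∀ τ, τ ≠ τs → (h.map (pit τ)).prod
      ≤ Real.exp (-(h.length : ℝ) * Δ) * (h.map (pit τs)).prod := fun τ hτ =>
    margin_prod _ _ Δ h (hpit τ).1
      (fun a ha => ⟨(hmargin a ha).1, (hmargin a ha).2 τ hτ⟩)
  have hp := hpref0 τs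
  set e := Real.exp (-(h.length : ℝ) * Δ) with he
  have he0 : 0 < e := Real.exp_pos _
  set S := ∑ τ', pref τ' * (h.map (pit τ')).prod with hS
  set P := (h.map (pit τs)).prod with hP
  have hSpos : 0 < S := lt_of_lt_of_le (mul_pos hp hPs)
    (Finset.single_le_sum (f := fun τ' => pref τ' * (h.map (pit τ')).prod)
      (fun τ _ => mul_nonneg (hpref0 τ).le (hPnn τ)) (Finset.mem_univ τs))
  have hSle : S ≤ e * P + pref τs * P := by
    calc S ≤ ∑ τ, (pref τ * (e * P) + if τ = τs then pref τs * P else 0) := by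
          apply Finset.sum_le_sum
          intro τ _
          by_cases hτ : τ = τs
          · subst hτ
            have : 0 ≤ pref τ * (e * P) := by positivity
            simp only [if_true]
            linarith
          · simp only [hτ, if_false, add_zero]
            exact mul_le_mul_of_nonneg_left (hle τ hτ) (hpref0 τ).le
      _ = e * P + pref τs * P := by
          rw [Finset.sum_add_distrib, ← Finset.sum_mul, hpref1]
          simp
  have hwnn : ∀ τ, 0 ≤ postW pref pit h τ := fun τ =>
    div_nonneg (mul_nonneg (hpref0 τ).le (hPnn τ)) hSpos.le
  have hw : 1 ≤ (1 + e / pref τs) * postW pref pit h τs := by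
    have : (1 + e / pref τs) * postW pref pit h τs = (e * P + pref τs * P) / S := by
      change (1 + e / pref τs) * (pref τs * P / S) = _
      field_simp
      ring
    rw [this, le_div_iff₀ hSpos]
    linarith
  have hc : 0 < 1 + e / pref τs := by positivity
  unfold Cov
  rw [Finset.mul_sum]
  apply Finset.sum_le_sum
  intro a _
  rcases (hπstar.1 a).eq_or_lt with h0 | h0
  · simp [← h0]
  · have hq := hsupp a h0
    have hL : pit τs a * postW pref pit h τs ≤ piLLM pref pit h a :=
      Finset.single_le_sum (f := fun τ => pit τ a * postW pref pit h τ)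
        (fun τ _ => mul_nonneg ((hpit τ).1 a) (hwnn τ)) (Finset.mem_univ τs)
    have hk : pit τs a ≤ (1 + e / pref τs) * piLLM pref pit h a := by
      calc pit τs a ≤ pit τs a * ((1 + e / pref τs) * postW pref pit h τs) :=
            le_mul_of_one_le_right hq.le hw
        _ = (1 + e / pref τs) * (pit τs a * postW pref pit h τs) := by ring
        _ ≤ _ := mul_le_mul_of_nonneg_left hL hc.le
    have hLpos : 0 < piLLM pref pit h a :=
      pos_of_mul_pos_right (lt_of_lt_of_le hq hk) hc.le
    rw [mul_div_assoc', div_le_div_iff₀ hLpos hq]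
    nlinarith [mul_le_mul_of_nonneg_left hk (sq_nonneg (πstar a))]
end

section
/- In-context convergence to the best reference policy. Assume the mixture-of-reference-policies model, fix a* ∈ 𝒜, and suppose τ* ∈ 𝒯 is the unique maximizer of π^τ(a*) over τ ∈ 𝒯, with π^{τ*}(a*) > 0 and p_ref(τ*) > 0. For each k ≥ 0, let h_k be the history consisting of a* repeated k times, so that π_LLM(a | h_k) = Σ_τ π^τ(a) · p_ref(τ)·π^τ(a*)^k / Σ_{τ'} p_ref(τ')·π^{τ'}(a*)^k. Then for every a ∈ 𝒜, π_LLM(a | h_k) → π^{τ*}(a) as k → ∞. -/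
open Finset Filter

/-- in-context convergence to the best reference policy.  If `τ*` is
the unique maximizer of `π^τ(a*)` (with `π^{τ*}(a*) > 0`, `p_ref(τ*) > 0`), then for
the history `h_k` consisting of `a*` repeated `k` times, `π_LLM(a|h_k) → π^{τ*}(a)`
as `k → ∞`, for every `a`. -/
theorem stmt17 {A : Type*} [Fintype A] {T : Type*} [Fintype T]
    (pref : T → ℝ) (hpref0 : ∀ τ, 0 < pref τ) (hpref1 : ∑ τ, pref τ = 1)
    (pit : T → A → ℝ) (hpit : ∀ τ, IsPolicy (pit τ))
    (astar : A) (τs : T)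
    (huniq : ∀ τ, τ ≠ τs → pit τ astar < pit τs astar)
    (hpos : 0 < pit τs astar) :
    ∀ a, Tendsto (fun k : ℕ => piLLM pref pit (List.replicate k astar) a)
      atTop (nhds (pit τs a)) := by
  classical
  intro a
  have hr : ∀ τ, Tendsto (fun k : ℕ => (pit τ astar / pit τs astar) ^ k) atTop
      (nhds (if τ = τs then 1 else 0)) := by
    intro τ
    by_cases h : τ = τs
    · subst h
      simp [div_self hpos.ne']
    · rw [if_neg h]
      exact tendsto_pow_atTop_nhds_zero_of_lt_one
        (div_nonneg ((hpit τ).1 astar) hpos.le) ((div_lt_one hpos).2 (huniq τ h))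
  have hn : ∀ τ, Tendsto (fun k : ℕ => pref τ * (pit τ astar / pit τs astar) ^ k) atTop
      (nhds (pref τ * (if τ = τs then 1 else 0))) := fun τ => (hr τ).const_mul _
  have hd := tendsto_finsetSum Finset.univ (fun τ _ => hn τ)
  have hsum : ∑ τ, pref τ * (if τ = τs then (1 : ℝ) else 0) = pref τs := by simp
  rw [hsum] at hd
  have hf := tendsto_finsetSum Finset.univ
    (fun τ _ => ((hn τ).div hd (hpref0 τs).ne').const_mul (pit τ a))
  have hlim : ∑ τ, pit τ a * (pref τ * (if τ = τs then (1 : ℝ) else 0) / pref τs)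
      = pit τs a := by
    rw [Finset.sum_eq_single τs]
    · simp [(hpref0 τs).ne']
    · intro b _ hb
      simp [hb]
    · simp
  rw [hlim] at hf
  refine hf.congr fun k => ?_
  unfold piLLM postW
  refine Finset.sum_congr rfl fun τ _ => ?_
  simp only [List.map_replicate, List.prod_replicate, div_pow, Pi.div_apply]
  have hk : pit τs astar ^ k ≠ 0 := pow_ne_zero _ hpos.ne'
  simp only [← mul_div_assoc, ← Finset.sum_div]
  rw [div_div_div_cancel_right₀ hk]
end
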